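/- Let r ≥ 2, and let A be a level standard graded artinian algebra of type 2, codimension r and socle degree e over k with h-vector (1, r, h_2, …, h_{e-1}, 2), and suppose a := h_{e-1} > r. Then for every integer i with 2 ≤ i ≤ e−2 one has h_{e−i} ≤ min{ C(r−1+i, i) + C(a−r−1+i, i), C(r−1+e−i, e−i) }. -/

import Mathlib

open MvPolynomial

/-!
The proof uses Macaulay duality, phrased with functionals on the polynomial ring `R` in place of
divided powers. A basis of the dual of the two-dimensional socle piece `A_e` gives functionals
`φ, ψ` on `R`. Levelness says that a form `g` of degree `e - i` lies in `I` exactly when `φ` and `ψ`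
vanish on all products `f * g` with `f` of degree `i`, whence (`IsLevelQuot.hilb_eq`)
`h_{e-i} = dim (R_i φ + R_i ψ)`, where `f φ` denotes the functional `g ↦ φ (f * g)`.

Let `ρ = dim R_1 φ`, and suppose `dim R_1 ψ ≤ ρ`. Let `K` be the space of linear forms `l` with
`l ψ ∈ R_1 φ`, and `Y` a complement of `K` in `R_1`. Then `dim Y = a - ρ`, and
`R_i = Y ^ i + R_{i-1} K` gives `R_i ψ ⊆ R_i φ + Y ^ i ψ`. Hence
(`finrank_contract_sup_le`) `R_i ψ` adds to `R_i φ` at most as many dimensions as there are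
monomials of degree `i` in `a - ρ` variables; replacing `(φ, ψ)` by `(0, φ)`, the space `R_i φ` has
at most as many dimensions as there are monomials of degree `i` in `ρ` variables. Since
`a - ρ ≤ ρ ≤ r` and the number of monomials of degree `i` is a convex function of the number of
variables (`multichoose_spread`), the sum of these two bounds is largest for `ρ = r`. No generic
choice of `φ` in the pencil is needed: the pencil may consist entirely of forms with `ρ < r`.

The other bound, by `dim R_{e-i}`, is immediate.
-/

/-- The degree-`d` graded piece of the quotient `k[x_1,…,x_r]/I`, realized as the image of
the space of homogeneous polynomials of degree `d` in the quotient. -/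
noncomputable def quotPiece (k : Type) [Field k] (r : ℕ)
    (I : Ideal (MvPolynomial (Fin r) k)) (d : ℕ) :
    Submodule k (MvPolynomial (Fin r) k ⧸ I) :=
  (homogeneousSubmodule (Fin r) k d).map (Ideal.Quotient.mkₐ k I).toLinearMap

/-- The Hilbert function of the quotient `k[x_1,…,x_r]/I`. -/
noncomputable def hilb (k : Type) [Field k] (r : ℕ)
    (I : Ideal (MvPolynomial (Fin r) k)) (d : ℕ) : ℕ :=
  Module.finrank k (quotPiece k r I d)

/-- `A = k[x_1,…,x_r]/I` is a level standard graded artinian algebra of socle degree `e` and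
type `t`: the ideal `I` is homogeneous, the Hilbert function of `A` vanishes in degrees `> e`
and equals `t` in degree `e`, and the socle of `A` (the annihilator of the irrelevant maximal
ideal) coincides with the degree-`e` graded piece `A_e`. -/
def IsLevelQuot (k : Type) [Field k] (r e t : ℕ)
    (I : Ideal (MvPolynomial (Fin r) k)) : Prop :=
  (∀ f ∈ I, ∀ d, homogeneousComponent d f ∈ I) ∧
  (∀ d, e < d → hilb k r I d = 0) ∧
  hilb k r I e = t ∧
  {a : MvPolynomial (Fin r) k ⧸ I | ∀ i, a * Ideal.Quotient.mk I (X i) = 0} =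
    (quotPiece k r I e : Set (MvPolynomial (Fin r) k ⧸ I))


/-! ### Multiset coefficients -/

/-- Convexity of `n ↦ multichoose n i`: moving two arguments away from each other by `d`
does not decrease the sum. -/
lemma multichoose_spread (i p q d : ℕ) (hpq : p ≤ q) :
    (p + d).multichoose i + q.multichoose i ≤ p.multichoose i + (q + d).multichoose i := by
  cases i with
  | zero => simp
  | succ i =>
    have mono : ∀ m n : ℕ, m ≤ n → m.multichoose i ≤ n.multichoose i := by
      intro m n hmn
      refine monotone_nat_of_le_succ (f := fun n => n.multichoose i) (fun n => ?_) hmn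
      cases i with
      | zero => simp
      | succ i => simp only [Nat.multichoose_succ_succ]; omega
    induction d with
    | zero => simp
    | succ d ih =>
      have h1 := Nat.multichoose_succ_succ (p + d) i
      have h2 := Nat.multichoose_succ_succ (q + d) i
      have h3 := mono (p + d + 1) (q + d + 1) (by omega)
      rw [← add_assoc, ← add_assoc]
      omega

/-! ### Powers of a finite-dimensional subspace -/

section Powers

variable {k R : Type*} [Field k] [CommRing R] [Algebra k R]

/-- The power `Y ^ i` is spanned by the images of the multisets of size `i` in a basis of `Y`. -/
lemma finrank_pow_le (Y : Submodule k R) [Module.Finite k Y] (i : ℕ) :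
    Module.finrank k ↥(Y ^ i) ≤ (Module.finrank k Y).multichoose i := by
  classical
  let b := Module.finBasis k Y
  let m : Sym (Fin (Module.finrank k Y)) i → R :=
    fun s => ((s : Multiset _).map fun j => (b j : R)).prod
  have hY : Y = Submodule.span k (Set.range fun j => (b j : R)) := by
    have h := congrArg (Submodule.map Y.subtype) b.span_eq
    rw [Submodule.map_span, Submodule.map_top, Submodule.range_subtype, ← Set.range_comp] at h
    exact h.symm
  have hle : Y ^ i ≤ Submodule.span k (Set.range m) := by
    conv_lhs => rw [hY]
    rw [Submodule.span_pow]
    refine Submodule.span_mono ?_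
    intro x hx
    obtain ⟨f, rfl⟩ := Set.mem_pow.1 hx
    choose g hg using fun j => (f j).2
    refine ⟨⟨(List.ofFn g : List _), by simp⟩, ?_⟩
    simp only [m, Sym.coe_mk, Multiset.map_coe, Multiset.prod_coe, List.map_ofFn]
    congr 2
    funext j
    exact hg j
  calc Module.finrank k ↥(Y ^ i)
      ≤ Module.finrank k (Submodule.span k (Set.range m)) :=
        have := Module.Finite.span_of_finite k (Set.finite_range m)
        Submodule.finrank_mono hle
    _ ≤ Fintype.card (Sym (Fin (Module.finrank k Y)) i) := finrank_range_le_card m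
    _ = _ := by rw [Sym.card_sym_eq_multichoose, Fintype.card_fin]

/-- A product of `i + 1` elements of `Y ⊔ K` is a product of elements of `Y`, up to products having
a factor in `K`. -/
lemma pow_le_of_sup_eq {V Y K : Submodule k R} (h : Y ⊔ K = V) (i : ℕ) :
    V ^ (i + 1) ≤ Y ^ (i + 1) ⊔ V ^ i * K := by
  induction i with
  | zero => simp [h]
  | succ i ih =>
    have hKV : K ≤ V := h ▸ le_sup_right
    have hYV : Y ≤ V := h ▸ le_sup_left
    calc V ^ (i + 1 + 1) = V ^ (i + 1) * Y ⊔ V ^ (i + 1) * K := by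
          rw [pow_succ, ← Submodule.mul_sup, h]
      _ ≤ (Y ^ (i + 1) ⊔ V ^ i * K) * Y ⊔ V ^ (i + 1) * K := by gcongr
      _ ≤ _ := by
          rw [Submodule.sup_mul, ← pow_succ]
          refine sup_le (sup_le le_sup_left (le_sup_of_le_right ?_)) le_sup_right
          rw [mul_assoc, mul_comm K Y, ← mul_assoc, pow_succ V i]
          gcongr

end Powers

/-! ### Contraction of functionals -/

section Contraction

variable {k R : Type*} [Field k] [CommRing R] [Algebra k R]

/-- Contraction of a functional: `contract φ f` is the functional `g ↦ φ (f * g)`. -/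
noncomputable def contract (φ : Module.Dual k R) : R →ₗ[k] Module.Dual k R :=
  (LinearMap.mul k R).compr₂ φ

@[simp] lemma contract_apply (φ : Module.Dual k R) (f g : R) :
    contract φ f g = φ (f * g) := rfl

lemma contract_mul_eq {φ ψ : Module.Dual k R} {l m : R} (h : contract φ m = contract ψ l)
    (f : R) : contract φ (f * m) = contract ψ (f * l) := by
  ext g
  have := LinearMap.congr_fun h (f * g)
  simp only [contract_apply] at this ⊢
  rw [mul_comm f m, mul_comm f l, mul_assoc, mul_assoc]
  exact this

lemma finrank_map_mkQ_add {M : Type*} [AddCommGroup M] [Module k M] {P Q : Submodule k M}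
    [Module.Finite k Q] (h : P ≤ Q) :
    Module.finrank k (Q.map P.mkQ) + Module.finrank k P = Module.finrank k Q := by
  have h1 := LinearMap.finrank_range_add_finrank_ker (P.mkQ ∘ₗ Q.subtype)
  rwa [LinearMap.range_comp, Submodule.range_subtype, LinearMap.ker_comp, Submodule.ker_mkQ,
    (Submodule.comapSubtypeEquivOfLe h).finrank_eq] at h1

/-- If the contractions of `ψ` by the linear forms `V` contribute only `s` dimensions modulo those
of `φ`, then contracting `ψ` by `V ^ (i + 1)` contributes modulo `V ^ (i + 1)` applied to `φ` at
most as many dimensions as there are degree `i + 1` monomials in `s` variables. -/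
lemma finrank_contract_sup_le (V : Submodule k R) [Module.Finite k V]
    (φ ψ : Module.Dual k R) (i : ℕ) :
    Module.finrank k ↥((V ^ (i + 1)).map (contract φ) ⊔ (V ^ (i + 1)).map (contract ψ)) ≤
      Module.finrank k ↥((V ^ (i + 1)).map (contract φ)) +
        (Module.finrank k ↥(V.map (contract φ) ⊔ V.map (contract ψ)) -
          Module.finrank k ↥(V.map (contract φ))).multichoose (i + 1) := by
  set P := V.map (contract φ)
  set Q := V.map (contract ψ)
  let T : V →ₗ[k] (Module.Dual k R ⧸ P) := P.mkQ ∘ₗ contract ψ ∘ₗ V.subtype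
  have hfgpow : ∀ (U : Submodule k R) [Module.Finite k U] (n : ℕ), Module.Finite k ↥(U ^ n) :=
    fun U _ n => Module.Finite.iff_fg.2 ((Module.Finite.iff_fg.1 ‹_›).pow n)
  have : ∀ n, Module.Finite k ↥(V ^ n) := hfgpow V
  have hrange : LinearMap.range T = (P ⊔ Q).map P.mkQ := by
    rw [Submodule.map_sup, Submodule.mkQ_map_self, bot_sup_eq, LinearMap.range_comp,
      LinearMap.range_comp, Submodule.range_subtype]
  have hs : Module.finrank k (LinearMap.range T) + Module.finrank k P =
      Module.finrank k ↥(P ⊔ Q) := by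
    rw [hrange]
    exact finrank_map_mkQ_add le_sup_left
  obtain ⟨C, hC⟩ := Submodule.exists_isCompl (LinearMap.ker T)
  have hCs : Module.finrank k C = Module.finrank k (LinearMap.range T) := by
    have h1 := LinearMap.finrank_range_add_finrank_ker T
    have h2 := Submodule.finrank_add_eq_of_isCompl hC
    omega
  let Y := C.map V.subtype
  let K := (LinearMap.ker T).map V.subtype
  have hYK : Y ⊔ K = V := by
    rw [← Submodule.map_sup, sup_comm, hC.sup_eq_top, Submodule.map_top, Submodule.range_subtype]
  have hYs : Module.finrank k Y = Module.finrank k C := Submodule.finrank_map_subtype_eq V C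
  have hY : Module.Finite k ↥(Y ^ (i + 1)) := hfgpow Y _
  have hK : (V ^ i * K).map (contract ψ) ≤ (V ^ (i + 1)).map (contract φ) := by
    rw [Submodule.map_le_iff_le_comap, Submodule.mul_le]
    rintro f hf _ ⟨l, hl, rfl⟩
    have hl' : contract ψ (l : R) ∈ P := by simpa [T] using hl
    obtain ⟨m, hm, hml⟩ := hl'
    refine ⟨f * m, ?_, contract_mul_eq hml f⟩
    rw [pow_succ]
    exact Submodule.mul_mem_mul hf hm
  have hle : (V ^ (i + 1)).map (contract φ) ⊔ (V ^ (i + 1)).map (contract ψ) ≤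
      (V ^ (i + 1)).map (contract φ) ⊔ (Y ^ (i + 1)).map (contract ψ) := by
    refine sup_le le_sup_left ((Submodule.map_mono (pow_le_of_sup_eq hYK i)).trans ?_)
    rw [Submodule.map_sup]
    exact sup_le le_sup_right (hK.trans le_sup_left)
  calc _ ≤ _ := Submodule.finrank_mono hle
    _ ≤ _ := Submodule.finrank_add_le_finrank_add_finrank _ _
    _ ≤ _ := by
      gcongr
      refine (Submodule.finrank_map_le _ _).trans ((finrank_pow_le Y (i + 1)).trans_eq ?_)
      congr 1
      omega

/-- The case of `finrank_contract_sup_le` in which the first functional is `0`. -/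
lemma finrank_contract_le (V : Submodule k R) [Module.Finite k V]
    (φ : Module.Dual k R) (i : ℕ) :
    Module.finrank k ↥((V ^ (i + 1)).map (contract φ)) ≤
      (Module.finrank k ↥(V.map (contract φ))).multichoose (i + 1) := by
  have h0 : ∀ U : Submodule k R, U.map (contract (0 : Module.Dual k R)) = ⊥ := by
    intro U
    rw [eq_bot_iff]
    rintro _ ⟨f, -, rfl⟩
    exact LinearMap.ext fun g => rfl
  have h := finrank_contract_sup_le V 0 φ i
  rwa [h0, h0, bot_sup_eq, bot_sup_eq, finrank_bot, zero_add, Nat.sub_zero] at h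

/-- The bound for a pair of functionals. If `ρ`, the larger of the dimensions of the spaces of
first contractions of `φ` and of `ψ`, is less than `r`, then convexity shows that the bound obtained
from `ρ` and `a - ρ` is no worse than the one from `r` and `a - r`. -/
lemma finrank_contract_pair_le (V : Submodule k R) [Module.Finite k V] {r : ℕ}
    (hr : Module.finrank k V ≤ r) (φ ψ : Module.Dual k R)
    (ha : r < Module.finrank k ↥(V.map (contract φ) ⊔ V.map (contract ψ))) (i : ℕ) :
    Module.finrank k ↥((V ^ (i + 1)).map (contract φ) ⊔ (V ^ (i + 1)).map (contract ψ)) ≤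
      r.multichoose (i + 1) +
        (Module.finrank k ↥(V.map (contract φ) ⊔ V.map (contract ψ)) - r).multichoose (i + 1) := by
  wlog h : Module.finrank k ↥(V.map (contract ψ)) ≤ Module.finrank k ↥(V.map (contract φ))
    generalizing φ ψ
  · rw [sup_comm (V.map _)] at ha ⊢
    rw [sup_comm (Submodule.map _ (V ^ (i + 1)))]
    exact this ψ φ ha (le_of_not_ge h)
  have h1 := finrank_contract_sup_le V φ ψ i
  have h2 := finrank_contract_le V φ i
  have h3 : Module.finrank k ↥(V.map (contract φ)) ≤ r := (Submodule.finrank_map_le _ _).trans hr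
  have h4 := Submodule.finrank_add_le_finrank_add_finrank (V.map (contract φ)) (V.map (contract ψ))
  set a := Module.finrank k ↥(V.map (contract φ) ⊔ V.map (contract ψ))
  set ρ := Module.finrank k ↥(V.map (contract φ))
  have h5 := multichoose_spread (i + 1) (a - r) ρ (r - ρ) (by omega)
  rw [show a - r + (r - ρ) = a - ρ by omega, show ρ + (r - ρ) = r by omega] at h5
  omega

end Contraction

/-! ### Macaulay duality for a level quotient -/

instance finite_homogeneousSubmodule (k : Type) [Field k] (r d : ℕ) :
    Module.Finite k (homogeneousSubmodule (Fin r) k d) :=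
  Module.Finite.iff_fg.2 (homogeneousSubmodule_fg _ _ d)

lemma finrank_homogeneousSubmodule_one_le (k : Type) [Field k] (r : ℕ) :
    Module.finrank k (homogeneousSubmodule (Fin r) k 1) ≤ r := by
  rw [homogeneousSubmodule_one_eq_span_X]
  exact (finrank_range_le_card _).trans_eq (Fintype.card_fin r)

lemma finrank_homogeneousSubmodule_le (k : Type) [Field k] (r d : ℕ) (hr : 2 ≤ r) :
    Module.finrank k (homogeneousSubmodule (Fin r) k d) ≤ (r - 1 + d).choose d := by
  have h1 := finrank_homogeneousSubmodule_one_le k r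
  have h2 := finrank_pow_le (homogeneousSubmodule (Fin r) k 1) d
  rw [homogeneousSubmodule_one_pow, Nat.multichoose_eq] at h2
  refine h2.trans (Nat.choose_le_choose d ?_)
  omega

section Duality

variable {k : Type} [Field k] {r e t : ℕ} {I : Ideal (MvPolynomial (Fin r) k)}

/-- In a level quotient a form of degree below `e` that is killed by all variables vanishes. -/
lemma IsLevelQuot.mem_of_X_mul_mem (hI : IsLevelQuot k r e t I) {d : ℕ} (hd : d < e)
    {g : MvPolynomial (Fin r) k} (hg : g.IsHomogeneous d) (h : ∀ j, X j * g ∈ I) : g ∈ I := by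
  have hsoc : Ideal.Quotient.mk I g ∈ (quotPiece k r I e : Set (MvPolynomial (Fin r) k ⧸ I)) := by
    rw [← hI.2.2.2]
    intro j
    rw [← map_mul, mul_comm]
    exact Ideal.Quotient.eq_zero_iff_mem.2 (h j)
  obtain ⟨g', hg', hgg⟩ := hsoc
  have hmem : g' - g ∈ I := Ideal.Quotient.eq.1 hgg
  have hc := hI.1 _ hmem d
  rw [map_sub, homogeneousComponent_of_mem hg', homogeneousComponent_of_mem hg,
    if_neg hd.ne, if_pos rfl, zero_sub] at hc
  exact neg_mem_iff.1 hc

/-- Levelness in its iterated form: multiplication into degree `e` detects every form of lower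
degree modulo `I`. -/
lemma IsLevelQuot.mem_of_forall_mul_mem (hI : IsLevelQuot k r e t I) (i : ℕ) :
    ∀ d, d + i = e → ∀ g : MvPolynomial (Fin r) k, g.IsHomogeneous d →
      (∀ f : MvPolynomial (Fin r) k, f.IsHomogeneous i → f * g ∈ I) → g ∈ I := by
  induction i with
  | zero => exact fun d _ g _ h => by simpa using h 1 (isHomogeneous_one _ _)
  | succ i ih =>
    intro d hd g hg h
    refine hI.mem_of_X_mul_mem (by omega) hg fun j => ?_
    refine ih (d + 1) (by omega) _ (by simpa [add_comm] using (isHomogeneous_X k j).mul hg) ?_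
    intro f hf
    rw [← mul_assoc]
    exact h _ (hf.mul (isHomogeneous_X k j))

/-- Two functionals on the polynomial ring which vanish on `I` and on every form whose degree is
not `e`, and which are jointly faithful on the degree `e` piece of the quotient by `I`. They play
the role of the two generators of the inverse system of `I`. -/
structure IsDualPair (I : Ideal (MvPolynomial (Fin r) k)) (e : ℕ)
    (φ ψ : Module.Dual k (MvPolynomial (Fin r) k)) : Prop where
  left_mem : ∀ g ∈ I, φ g = 0
  right_mem : ∀ g ∈ I, ψ g = 0
  left_degree : ∀ d, d ≠ e → ∀ g : MvPolynomial (Fin r) k, g.IsHomogeneous d → φ g = 0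
  right_degree : ∀ d, d ≠ e → ∀ g : MvPolynomial (Fin r) k, g.IsHomogeneous d → ψ g = 0
  faithful : ∀ g : MvPolynomial (Fin r) k, g.IsHomogeneous e → φ g = 0 → ψ g = 0 → g ∈ I

/-- The coordinate functionals of a basis of the two-dimensional degree `e` piece, composed with
the projection onto degree `e`, form a dual pair. -/
lemma IsLevelQuot.exists_isDualPair (hI : IsLevelQuot k r e 2 I) :
    ∃ φ ψ : Module.Dual k (MvPolynomial (Fin r) k), IsDualPair I e φ ψ := by
  have : Module.Finite k (quotPiece k r I e) :=
    inferInstanceAs (Module.Finite k ((homogeneousSubmodule (Fin r) k e).map _))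
  let b : Module.Basis (Fin 2) k (quotPiece k r I e) := Module.finBasisOfFinrankEq _ _ hI.2.2.1
  let π : MvPolynomial (Fin r) k →ₗ[k] quotPiece k r I e :=
    ((Ideal.Quotient.mkₐ k I).toLinearMap ∘ₗ homogeneousComponent e).codRestrict _
      fun g => Submodule.mem_map_of_mem (homogeneousComponent_mem e g)
  have hπ : ∀ g, (π g : MvPolynomial (Fin r) k ⧸ I) =
      Ideal.Quotient.mk I (homogeneousComponent e g) := fun _ => rfl
  have hπI : ∀ g ∈ I, π g = 0 := fun g hg =>
    Subtype.ext (Ideal.Quotient.eq_zero_iff_mem.2 (hI.1 g hg e))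
  have hπd : ∀ d, d ≠ e → ∀ g : MvPolynomial (Fin r) k, g.IsHomogeneous d → π g = 0 := by
    intro d hd g hg
    have h0 : homogeneousComponent e g = 0 := by
      rw [homogeneousComponent_of_mem hg, if_neg hd.symm]
    exact Subtype.ext (by rw [hπ, h0, map_zero]; rfl)
  refine ⟨b.coord 0 ∘ₗ π, b.coord 1 ∘ₗ π, ?_, ?_, ?_, ?_, ?_⟩
  · exact fun g hg => by simp [hπI g hg]
  · exact fun g hg => by simp [hπI g hg]
  · exact fun d hd g hg => by simp [hπd d hd g hg]
  · exact fun d hd g hg => by simp [hπd d hd g hg]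
  · intro g hg h0 h1
    have hz : π g = 0 := b.forall_coord_eq_zero_iff.1 fun j => by
      fin_cases j
      · exact h0
      · exact h1
    have hc : homogeneousComponent e g = g := by rw [homogeneousComponent_of_mem hg, if_pos rfl]
    rw [← Ideal.Quotient.eq_zero_iff_mem, ← hc, ← hπ, hz]
    rfl

lemma finrank_dual_submodule {N : Type*} [AddCommGroup N] [Module k N] (S : Submodule k N) :
    Module.finrank k (Module.Dual k S) = Module.finrank k S :=
  Subspace.dual_finrank_eq

/-- Let the elements of a finite-dimensional space `W` act on `R` as functionals through `ev`. If
the common zeros of `W` in `V` are the kernel of `u` on `V`, and no nonzero element of `W` vanishes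
on `V`, then `W` and the image of `V` under `u` are in perfect duality. -/
lemma finrank_map_eq_finrank_functionals {R A : Type*} [AddCommGroup R] [Module k R]
    [AddCommGroup A] [Module k A] {D : Type*} [AddCommGroup D] [Module k D]
    (ev : D →ₗ[k] Module.Dual k R) (u : R →ₗ[k] A) (V : Submodule k R) [Module.Finite k V]
    (W : Submodule k D) [Module.Finite k W]
    (hker : ∀ g ∈ V, (u g = 0 ↔ ∀ w ∈ W, ev w g = 0))
    (hsep : ∀ w ∈ W, (∀ g ∈ V, ev w g = 0) → w = 0) :
    Module.finrank k (V.map u) = Module.finrank k W := by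
  let p : V →ₗ[k] Module.Dual k W := (ev ∘ₗ W.subtype).flip ∘ₗ V.subtype
  have hkers : LinearMap.ker (u ∘ₗ V.subtype) = LinearMap.ker p := by
    ext g
    rw [LinearMap.mem_ker, LinearMap.mem_ker, LinearMap.ext_iff]
    exact (hker g g.2).trans ⟨fun h w => h w w.2, fun h w hw => h ⟨w, hw⟩⟩
  have hr1 := LinearMap.finrank_range_add_finrank_ker (u ∘ₗ V.subtype)
  have hr2 := LinearMap.finrank_range_add_finrank_ker p
  rw [LinearMap.range_comp, Submodule.range_subtype, hkers] at hr1
  have hle : Module.finrank k (LinearMap.range p) ≤ Module.finrank k W :=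
    (Submodule.finrank_le _).trans_eq Subspace.dual_finrank_eq
  let q : W →ₗ[k] Module.Dual k (LinearMap.range p) :=
    (LinearMap.range p).subtype.dualMap ∘ₗ Module.Dual.eval k W
  have hq : Function.Injective q := by
    rw [← LinearMap.ker_eq_bot, eq_bot_iff]
    intro w hw
    refine Subtype.ext (hsep w w.2 fun g hg => ?_)
    exact LinearMap.congr_fun hw ⟨p ⟨g, hg⟩, LinearMap.mem_range_self p _⟩
  have hge : Module.finrank k W ≤ Module.finrank k (LinearMap.range p) :=
    (LinearMap.finrank_le_finrank_of_injective hq).trans_eq (finrank_dual_submodule _)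
  omega

/-- The Hilbert function of a level quotient in degree `e - i` counts the independent
contractions of degree `i` of a dual pair. -/
lemma IsLevelQuot.hilb_eq (hI : IsLevelQuot k r e t I)
    {φ ψ : Module.Dual k (MvPolynomial (Fin r) k)} (h : IsDualPair I e φ ψ) {i : ℕ} (hi : i ≤ e) :
    hilb k r I (e - i) = Module.finrank k
      ↥((homogeneousSubmodule (Fin r) k i).map (contract φ) ⊔
        (homogeneousSubmodule (Fin r) k i).map (contract ψ)) := by
  refine finrank_map_eq_finrank_functionals LinearMap.id _ _ _ ?_ ?_
  · intro g hg
    have hmk : (Ideal.Quotient.mkₐ k I).toLinearMap g = 0 ↔ g ∈ I :=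
      Ideal.Quotient.eq_zero_iff_mem
    rw [hmk]
    constructor
    · intro hgI w hw
      obtain ⟨_, ⟨f₁, -, rfl⟩, _, ⟨f₂, -, rfl⟩, rfl⟩ := Submodule.mem_sup.1 hw
      simp [h.left_mem _ (I.mul_mem_left f₁ hgI), h.right_mem _ (I.mul_mem_left f₂ hgI)]
    · intro hw
      refine hI.mem_of_forall_mul_mem i (e - i) (by omega) g hg fun f hf => ?_
      have hfg : (f * g).IsHomogeneous e := by
        have := hf.mul hg
        rwa [show i + (e - i) = e by omega] at this
      exact h.faithful _ hfg
        (hw _ (Submodule.mem_sup_left (Submodule.mem_map_of_mem hf)))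
        (hw _ (Submodule.mem_sup_right (Submodule.mem_map_of_mem hf)))
  · intro w hw hV
    -- Contractions of degree `i` vanish off degree `e - i`, so `w` is determined by that degree.
    have hoff : ∀ d, d ≠ e - i → ∀ g : MvPolynomial (Fin r) k, g.IsHomogeneous d → w g = 0 := by
      intro d hd g hg
      obtain ⟨_, ⟨f₁, hf₁, rfl⟩, _, ⟨f₂, hf₂, rfl⟩, rfl⟩ := Submodule.mem_sup.1 hw
      have hne : i + d ≠ e := by omega
      simp [h.left_degree _ hne _ (IsHomogeneous.mul hf₁ hg),
        h.right_degree _ hne _ (IsHomogeneous.mul hf₂ hg)]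
    refine LinearMap.ext fun g => ?_
    rw [← sum_homogeneousComponent g, map_sum]
    refine Finset.sum_eq_zero fun d _ => ?_
    by_cases hd : d = e - i
    · exact hV _ (hd ▸ homogeneousComponent_mem d g)
    · exact hoff d hd _ (homogeneousComponent_isHomogeneous d g)

end Duality

/-- Theorem 3.8 ii), upper bound: for `r ≥ 2` and a level algebra of type 2, codimension `r`
and socle degree `e` with `a := h_{e-1} > r`, one has, for every `2 ≤ i ≤ e-2`,
`h_{e-i} ≤ min (C(r-1+i, i) + C(a-r-1+i, i)) (C(r-1+e-i, e-i))`. -/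
theorem stmt12 (k : Type) [Field k] [CharZero k] (r e a : ℕ) (hr : 2 ≤ r)
    (I : Ideal (MvPolynomial (Fin r) k))
    (hI : IsLevelQuot k r e 2 I) (hcodim : hilb k r I 1 = r)
    (hadef : hilb k r I (e - 1) = a) (har : r < a) :
    ∀ i, 2 ≤ i → i ≤ e - 2 →
      hilb k r I (e - i) ≤
        min ((r - 1 + i).choose i + (a - r - 1 + i).choose i)
          ((r - 1 + (e - i)).choose (e - i)) := by
  intro i hi hie
  refine le_min ?_ ?_
  · obtain ⟨φ, ψ, h⟩ := hI.exists_isDualPair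
    have ha := hI.hilb_eq h (i := 1) (by omega)
    rw [hadef] at ha
    rw [hI.hilb_eq h (by omega)]
    obtain ⟨i, rfl⟩ : ∃ j, i = j + 1 := ⟨i - 1, by omega⟩
    have hb := finrank_contract_pair_le (homogeneousSubmodule (Fin r) k 1)
      (finrank_homogeneousSubmodule_one_le k r) φ ψ (ha ▸ har) i
    rw [← ha, homogeneousSubmodule_one_pow, Nat.multichoose_eq, Nat.multichoose_eq] at hb
    rwa [show r - 1 + (i + 1) = r + (i + 1) - 1 by omega,
      show a - r - 1 + (i + 1) = a - r + (i + 1) - 1 by omega]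
  · exact (Submodule.finrank_map_le _ _).trans (finrank_homogeneousSubmodule_le k r _ hr)
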